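/- Let Z be a real random variable whose law has density p with respect to Lebesgue measure such that E|Z| < ∞, E[Z] = 0, and there exist −∞ ≤ a < 0 < b ≤ +∞ with p(x) > 0 if, and only if, x ∈ (a,b); define τ(x) = (∫_x^{+∞} y p(y) dy)/p(x) · 1_{(a,b)}(x), and assume ∫₀^b (y/τ(y)) dy = +∞ and ∫_a^0 (y/τ(y)) dy = −∞. Let Y be a real random variable with absolutely continuous distribution such that E[τ(Y) f'(Y) − Y f(Y)] = 0 for every differentiable f : ℝ → ℝ for which x ↦ |τ(x) f'(x)| + |x f(x)| is bounded. Then Y has the same law as Z. -/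

import Mathlib

open MeasureTheory Real Set


open Filter Topology in
/-- `s` has (outer) Lebesgue density zero at `x`. -/
def Thin (s : Set ℝ) (x : ℝ) : Prop :=
  ∀ ε : ℝ, 0 < ε → ∀ᶠ r in 𝓝[>] (0 : ℝ),
    volume (s ∩ Metric.closedBall x r) ≤ ENNReal.ofReal (ε * r)

theorem Thin.mono {s t : Set ℝ} {x : ℝ} (h : Thin t x) (hst : s ⊆ t) : Thin s x := by
  intro ε hε
  filter_upwards [h ε hε] with r hr
  exact (measure_mono (inter_subset_inter_left _ hst)).trans hr

theorem Thin.union {s t : Set ℝ} {x : ℝ} (hs : Thin s x) (ht : Thin t x) : Thin (s ∪ t) x := by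
  intro ε hε
  filter_upwards [hs (ε / 2) (by positivity), ht (ε / 2) (by positivity), self_mem_nhdsWithin]
    with r h1 h2 hr
  have hr : 0 < r := hr
  rw [union_inter_distrib_right]
  refine (measure_union_le _ _).trans ((add_le_add h1 h2).trans ?_)
  rw [← ENNReal.ofReal_add (by positivity) (by positivity)]
  apply le_of_eq
  congr 1
  ring

theorem thin_of_null {s : Set ℝ} (hs : volume s = 0) (x : ℝ) : Thin s x := by
  intro ε hε
  refine Filter.Eventually.of_forall fun r => ?_
  rw [measure_mono_null inter_subset_left hs]
  exact zero_le

theorem thin_compl_of_open {U : Set ℝ} (hU : IsOpen U) {x : ℝ} (hx : x ∈ U) : Thin Uᶜ x := by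
  intro ε hε
  obtain ⟨δ, hδ, hball⟩ := Metric.isOpen_iff.1 hU x hx
  filter_upwards [Ioo_mem_nhdsGT hδ] with r hr
  have : Uᶜ ∩ Metric.closedBall x r = ∅ := by
    ext y
    simp only [mem_inter_iff, mem_compl_iff, mem_empty_iff_false, iff_false, not_and]
    intro hy hyr
    exact hy (hball (Metric.closedBall_subset_ball hr.2 hyr))
  rw [this, measure_empty]
  exact zero_le

theorem ae_thin {V : Set ℝ} (hV : MeasurableSet V) : ∀ᵐ x, x ∉ V → Thin V x := by
  filter_upwards [Besicovitch.ae_tendsto_measure_inter_div_of_measurableSet volume hV] with x hx hxV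
  rw [indicator_of_notMem hxV] at hx
  intro ε hε
  have h2 : (0 : ENNReal) < ENNReal.ofReal (ε / 2) := by
    rw [ENNReal.ofReal_pos]; positivity
  filter_upwards [hx.eventually (gt_mem_nhds h2), self_mem_nhdsWithin] with r h hr
  have hr : 0 < r := hr
  rw [Real.volume_closedBall] at h
  have h3 : ENNReal.ofReal (2 * r) ≠ 0 := by
    rw [Ne, ENNReal.ofReal_eq_zero]; push Not; positivity
  have := (ENNReal.div_le_iff h3 ENNReal.ofReal_ne_top).1 h.le
  refine this.trans (le_of_eq ?_)
  rw [← ENNReal.ofReal_mul (by positivity)]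
  congr 1
  ring

theorem bad_null {V : Set ℝ} (hV : MeasurableSet V) : volume {x | x ∉ V ∧ ¬ Thin V x} = 0 := by
  have := ae_thin hV
  rw [ae_iff] at this
  convert this using 3
  simp

theorem exists_cover {B U : Set ℝ} (hB : volume B = 0) (hU : IsOpen U) (hBU : B ⊆ U) :
    ∃ O : Set ℝ, IsOpen O ∧ B ⊆ O ∧ O ⊆ U ∧ ∀ x, x ∉ U → Thin O x := by
  let W : ℕ → Set ℝ := fun k => {y | ENNReal.ofReal (1 / ((k : ℝ) + 1)) < Metric.infEDist y Uᶜ}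
  have hWo : ∀ k, IsOpen (W k) := fun k =>
    isOpen_lt continuous_const Metric.continuous_infEDist
  have hWU : ∀ k, W k ⊆ U := by
    intro k y hy
    by_contra hyU
    have : Metric.infEDist y Uᶜ = 0 := Metric.infEDist_zero_of_mem hyU
    simp only [W, mem_ofPred_eq, this] at hy
    exact not_lt_zero hy
  have hUW : ∀ y ∈ U, ∃ k, y ∈ W k := by
    intro y hy
    have h0 : 0 < Metric.infEDist y Uᶜ := by
      rw [pos_iff_ne_zero, Ne, ← Metric.mem_closure_iff_infEDist_zero,
        hU.isClosed_compl.closure_eq]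
      simpa using hy
    obtain ⟨c, hc0, hc⟩ := ENNReal.lt_iff_exists_nnreal_btwn.1 h0
    obtain ⟨k, hk⟩ := exists_nat_one_div_lt (show (0 : ℝ) < c by exact_mod_cast hc0)
    refine ⟨k, lt_of_le_of_lt ?_ hc⟩
    exact ENNReal.ofReal_le_of_le_toReal (by simpa using hk.le)
  let δ : ℕ → ENNReal := fun k => ENNReal.ofReal ((1 / ((k : ℝ) + 1)) ^ 2 * (1 / 2) ^ (k + 1))
  have hδ : ∀ k, 0 < δ k := fun k => by
    simp only [δ, ENNReal.ofReal_pos]; positivity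
  have hex : ∀ k, ∃ O, B ∩ W k ⊆ O ∧ IsOpen O ∧ volume O < δ k := by
    intro k
    obtain ⟨O, h1, h2, h3⟩ := Set.exists_isOpen_lt_of_lt (μ := volume) (B ∩ W k) (δ k)
      (by rw [measure_mono_null inter_subset_left hB]; exact hδ k)
    exact ⟨O, h1, h2, h3⟩
  choose O hO1 hO2 hO3 using hex
  refine ⟨⋃ k, O k ∩ W k, isOpen_iUnion fun k => (hO2 k).inter (hWo k), ?_, ?_, ?_⟩
  · intro y hy
    obtain ⟨k, hk⟩ := hUW y (hBU hy)
    exact mem_iUnion.2 ⟨k, hO1 k ⟨hy, hk⟩, hk⟩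
  · exact iUnion_subset fun k => inter_subset_right.trans (hWU k)
  · intro x hx ε hε
    filter_upwards [Ioo_mem_nhdsGT hε] with r hr
    have hr0 := hr.1
    have key : ∀ k, volume (O k ∩ W k ∩ Metric.closedBall x r)
        ≤ ENNReal.ofReal (r ^ 2 * (1 / 2) ^ (k + 1)) := by
      intro k
      by_cases hne : (O k ∩ W k ∩ Metric.closedBall x r).Nonempty
      · obtain ⟨y, ⟨_, hyW⟩, hyr⟩ := hne
        have h1 : ENNReal.ofReal (1 / ((k : ℝ) + 1)) < ENNReal.ofReal r := by
          refine lt_of_lt_of_le hyW ?_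
          refine (Metric.infEDist_le_edist_of_mem (show x ∈ Uᶜ from hx)).trans ?_
          rw [edist_dist]
          exact ENNReal.ofReal_le_ofReal hyr
        have h2 : 1 / ((k : ℝ) + 1) ≤ r := ((ENNReal.ofReal_lt_ofReal_iff hr0).1 h1).le
        refine (measure_mono (inter_subset_left.trans inter_subset_left)).trans
          ((hO3 k).le.trans (ENNReal.ofReal_le_ofReal ?_))
        gcongr
      · rw [not_nonempty_iff_eq_empty.1 hne, measure_empty]; exact zero_le
    rw [iUnion_inter]
    refine (measure_iUnion_le _).trans ((ENNReal.tsum_le_tsum key).trans ?_)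
    have hs : HasSum (fun k : ℕ => r ^ 2 * (1 / 2 : ℝ) ^ (k + 1)) (r ^ 2) := by
      have := (hasSum_geometric_two.mul_left (1 / 2 : ℝ)).mul_left (r ^ 2)
      have e1 : (fun k : ℕ => r ^ 2 * (1 / 2 : ℝ) ^ (k + 1))
          = fun i : ℕ => r ^ 2 * (1 / 2 * (1 / 2) ^ i) := by
        funext k; rw [pow_succ]; ring
      rw [e1]
      have e2 : r ^ 2 * (1 / 2 * 2) = r ^ 2 := by ring
      rwa [e2] at this
    rw [← ENNReal.ofReal_tsum_of_nonneg (fun k => by positivity) hs.summable, hs.tsum_eq]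
    apply ENNReal.ofReal_le_ofReal
    nlinarith [hr.2]

/-- The real line with the density topology. -/
def DensityReal : Type := ℝ

instance : TopologicalSpace DensityReal where
  IsOpen s := ∀ x ∈ s, Thin (sᶜ : Set ℝ) x
  isOpen_univ := by
    intro x _
    exact (thin_of_null (measure_empty (μ := volume)) x).mono (fun y hy => hy (mem_univ _))
  isOpen_inter s t hs ht x hx := by
    refine ((hs x hx.1).union (ht x hx.2)).mono fun y hy => ?_
    by_contra hcon
    refine hy ⟨?_, ?_⟩
    · by_contra h; exact hcon (Or.inl h)
    · by_contra h; exact hcon (Or.inr h)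
  isOpen_sUnion S hS x hx := by
    obtain ⟨s, hs, hxs⟩ := hx
    exact (hS s hs x hxs).mono (compl_subset_compl.2 (subset_sUnion_of_mem hs))

theorem density_isOpen_iff (s : Set DensityReal) :
    IsOpen s ↔ ∀ x ∈ s, Thin (sᶜ : Set ℝ) x := Iff.rfl

/-- The relation used in the Urysohn construction. -/
def PRel (c u : Set DensityReal) : Prop :=
  IsOpen (X := ℝ) u ∧ ∃ V : Set ℝ, IsOpen V ∧ V ⊆ c ∧ c ⊆ V ∪ {x : ℝ | x ∉ V ∧ ¬ Thin V x}

theorem density_isOpen_of_isOpen {u : Set ℝ} (hu : IsOpen u) : IsOpen (X := DensityReal) u :=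
  fun _ hx => thin_compl_of_open hu hx

theorem density_isClosed_hull {V : Set ℝ} (hV : IsOpen V) :
    IsClosed (X := DensityReal) (V ∪ {x : ℝ | x ∉ V ∧ ¬ Thin V x}) := by
  rw [← isOpen_compl_iff]
  intro x hx
  have hx' : x ∉ V ∧ Thin V x := by
    have h2 : ¬ (x ∈ V ∨ (x ∉ V ∧ ¬ Thin V x)) := hx
    tauto
  exact (hx'.2.union (thin_of_null (bad_null hV.measurableSet) _)).mono
    fun y hy => not_not.1 hy

theorem PRel_split {c u : Set DensityReal} (hc : IsClosed c) (hP : PRel c u)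
    (_hu : IsOpen u) (hcu : c ⊆ u) :
    ∃ v : Set DensityReal, IsOpen v ∧ c ⊆ v ∧ closure v ⊆ u ∧ PRel c v ∧ PRel (closure v) u := by
  obtain ⟨hu', V, hVo, hVc, hcV⟩ := hP
  have hthin : ∀ x : ℝ, x ∉ u → Thin V x := by
    intro x hx
    have h1 : IsOpen cᶜ := hc.isOpen_compl
    have h2 := h1 x (fun h => hx (hcu h))
    exact h2.mono fun y hy hy' => hy' (hVc hy)
  obtain ⟨O, hO, hBO, hOu, hOthin⟩ := exists_cover (bad_null hVo.measurableSet) hu' (by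
    intro x hx
    by_contra hxu
    exact hx.2 (hthin x hxu))
  have hWo : IsOpen (V ∪ O) := hVo.union hO
  have hcl : closure (X := DensityReal) (V ∪ O)
      ⊆ (V ∪ O) ∪ {x : ℝ | x ∉ V ∪ O ∧ ¬ Thin (V ∪ O) x} :=
    closure_minimal subset_union_left (density_isClosed_hull hWo)
  have hcW : c ⊆ V ∪ O := hcV.trans (union_subset_union_right _ hBO)
  refine ⟨V ∪ O, density_isOpen_of_isOpen hWo, hcW, ?_, ⟨hWo, V, hVo, hVc, hcV⟩,
    hu', V ∪ O, hWo, subset_closure (X := DensityReal), hcl⟩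
  refine hcl.trans (union_subset (union_subset (hVc.trans hcu) hOu) ?_)
  intro x hx
  by_contra hxu
  exact hx.2 ((hthin x hxu).union (hOthin x hxu))

theorem measurable_approx (c : Urysohns.CU PRel) (n : ℕ) :
    Measurable (fun x : ℝ => c.approx n x) := by
  induction n generalizing c with
  | zero =>
    have h : MeasurableSet (α := ℝ) c.U := IsOpen.measurableSet c.P_C_U.1
    exact (measurable_const (a := (1 : ℝ))).indicator h.compl
  | succ n ih =>
    have h1 := ih c.left
    have h2 := ih c.right
    simp only [Urysohns.CU.approx, midpoint_eq_smul_add]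
    exact (h1.add h2).const_smul (⅟ 2 : ℝ)

theorem measurable_lim (c : Urysohns.CU PRel) : Measurable (fun x : ℝ => c.lim x) :=
  measurable_of_tendsto_metrizable (measurable_approx c)
    (tendsto_pi_nhds.2 fun x => c.tendsto_approx_atTop x)

theorem hasDerivAt_of_thin {g : ℝ → ℝ} (hg : Measurable g) (h01 : ∀ x, 0 ≤ g x ∧ g x ≤ 1) (x : ℝ)
    (h : ∀ η : ℝ, 0 < η → Thin {y | ¬ |g y - g x| < η} x) :
    HasDerivAt (fun y => ∫ t in (0 : ℝ)..y, g t) (g x) x := by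
  have hyint : ∀ u v : ℝ, IntervalIntegrable g volume u v := fun u v =>
    (intervalIntegrable_const (c := (1 : ℝ))).mono_fun hg.aestronglyMeasurable
      (Filter.Eventually.of_forall fun y => by
        have : |g y| ≤ |(1 : ℝ)| := by rw [abs_of_nonneg (h01 y).1, abs_one]; exact (h01 y).2
        exact this)
  rw [hasDerivAt_iff_isLittleO_nhds_zero, Asymptotics.isLittleO_iff]
  intro ε hε
  have hev := h (ε / 2) (by positivity) (ε / 2) (by positivity)
  obtain ⟨δ, hδ, hball⟩ := mem_nhdsGT_iff_exists_Ioo_subset.1 hev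
  have hδ : 0 < δ := hδ
  filter_upwards [Metric.ball_mem_nhds (0 : ℝ) hδ] with k hk
  rw [mem_ball_zero_iff, Real.norm_eq_abs] at hk
  rcases eq_or_ne k 0 with rfl | hk0
  · simp
  have hkpos : 0 < |k| := abs_pos.2 hk0
  have hvol := hball ⟨hkpos, hk⟩
  simp only [mem_ofPred_eq] at hvol
  have e1 : (∫ t in (0 : ℝ)..(x + k), g t) - (∫ t in (0 : ℝ)..x, g t) - k • g x
      = ∫ t in x..(x + k), (g t - g x) := by
    rw [intervalIntegral.integral_interval_sub_left (hyint _ _) (hyint _ _),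
      intervalIntegral.integral_sub (hyint _ _) intervalIntegrable_const]
    simp
  rw [e1]
  set S : Set ℝ := {y | ¬ |g y - g x| < ε / 2} with hS
  have hSm : MeasurableSet S :=
    (measurableSet_lt ((hg.sub_const _).norm) measurable_const).compl
  have hsub : uIoc x (x + k) ⊆ Metric.closedBall x |k| := by
    intro y hy
    rw [Metric.mem_closedBall, Real.dist_eq]
    rcases hk0.lt_or_gt with h0 | h0
    · rw [uIoc_of_ge (by linarith)] at hy
      rw [abs_of_neg h0, abs_le]; constructor <;> linarith [hy.1, hy.2]
    · rw [uIoc_of_le (by linarith)] at hy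
      rw [abs_of_pos h0, abs_le]; constructor <;> linarith [hy.1, hy.2]
  have hvk : volume (uIoc x (x + k)) = ENNReal.ofReal |k| := by
    rw [uIoc, Real.volume_Ioc]; congr 1
    rcases hk0.lt_or_gt with h0 | h0
    · rw [max_eq_left (by linarith), min_eq_right (by linarith), abs_of_neg h0]; ring
    · rw [max_eq_right (by linarith), min_eq_left (by linarith), abs_of_pos h0]; ring
  have hvr : volume.real (uIoc x (x + k)) = |k| := by
    rw [measureReal_def, hvk, ENNReal.toReal_ofReal (abs_nonneg _)]
  have hfin : volume (uIoc x (x + k)) ≠ ⊤ := by rw [hvk]; exact ENNReal.ofReal_ne_top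
  have hb : ∀ t, |g t - g x| ≤ ε / 2 + S.indicator 1 t := by
    intro t
    by_cases ht : t ∈ S
    · rw [indicator_of_mem ht, Pi.one_apply, abs_le]
      have := h01 t
      have := h01 x
      constructor <;> linarith
    · rw [indicator_of_notMem ht]
      have : |g t - g x| < ε / 2 := by simpa [hS] using ht
      linarith
  have hI : IntegrableOn (fun t => g t - g x) (uIoc x (x + k)) :=
    ((hyint x (x + k)).sub intervalIntegrable_const).def'
  have hSI : IntegrableOn (S.indicator (1 : ℝ → ℝ)) (uIoc x (x + k)) :=
    (integrableOn_const (C := (1 : ℝ)) hfin).indicator hSm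
  calc ‖∫ t in x..(x + k), (g t - g x)‖
      ≤ ∫ t in uIoc x (x + k), ‖g t - g x‖ := by
        exact intervalIntegral.norm_integral_le_integral_norm_uIoc
    _ ≤ ∫ t in uIoc x (x + k), (ε / 2 + S.indicator 1 t) := by
        apply setIntegral_mono hI.norm ((integrableOn_const hfin).add hSI)
        intro t; exact hb t
    _ = ε / 2 * |k| + volume.real (S ∩ uIoc x (x + k)) := by
        rw [integral_add (integrableOn_const (C := ε / 2) hfin).integrable hSI.integrable, setIntegral_const, hvr,
          integral_indicator_one hSm, measureReal_restrict_apply hSm]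
        simp [mul_comm]
    _ ≤ ε / 2 * |k| + ε / 2 * |k| := by
        gcongr
        rw [measureReal_def]
        refine ENNReal.toReal_le_of_le_ofReal (by positivity) ?_
        exact (measure_mono (inter_subset_inter_right _ hsub)).trans hvol
    _ = ε * ‖k‖ := by rw [Real.norm_eq_abs]; ring

theorem exists_bump {K : Set ℝ} (hK : IsClosed K) {ε : ENNReal} (hε : 0 < ε) :
    ∃ g : ℝ → ℝ, Measurable g ∧ (∀ x, 0 ≤ g x ∧ g x ≤ 1) ∧ (∀ x, x ∉ K → g x = 0) ∧
      volume {x | x ∈ K ∧ g x ≠ 1} < ε ∧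
      ∀ x, HasDerivAt (fun y => ∫ t in (0 : ℝ)..y, g t) (g x) x := by
  have hKo : IsOpen Kᶜ := hK.isOpen_compl
  have hnull := bad_null hKo.measurableSet
  obtain ⟨O, hBO, hO, hOε⟩ := Set.exists_isOpen_lt_of_lt (μ := volume) _ ε
    (by rw [hnull]; exact hε)
  let c : Urysohns.CU PRel :=
    { C := Kᶜ ∪ {x : ℝ | x ∉ Kᶜ ∧ ¬ Thin Kᶜ x}
      U := Kᶜ ∪ O
      P_C_U := ⟨hKo.union hO, Kᶜ, hKo, subset_union_left, subset_rfl⟩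
      closed_C := density_isClosed_hull hKo
      open_U := density_isOpen_of_isOpen (hKo.union hO)
      subset := union_subset_union_right _ hBO
      hP := PRel_split }
  refine ⟨fun x : ℝ => c.lim x, measurable_lim c, fun x => ⟨c.lim_nonneg x, c.lim_le_one x⟩,
    fun x hx => c.lim_of_mem_C x (Or.inl hx), ?_, ?_⟩
  · refine lt_of_le_of_lt (measure_mono ?_) hOε
    intro x hx
    by_contra hxO
    refine hx.2 (c.lim_of_notMem_U x ?_)
    rintro (h | h)
    · exact h hx.1
    · exact hxO h
  · intro x
    refine hasDerivAt_of_thin (measurable_lim c) (fun x => ⟨c.lim_nonneg x, c.lim_le_one x⟩) x ?_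
    intro η hη
    have ho : IsOpen {y : DensityReal | |c.lim y - c.lim x| < η} :=
      isOpen_lt ((c.continuous_lim.sub continuous_const).abs) continuous_const
    have hx0 : |c.lim x - c.lim x| < η := by rw [sub_self, abs_zero]; exact hη
    exact ho x hx0


theorem locInt_mul_id {q : ℝ → ℝ} (hq : Integrable q) :
    LocallyIntegrable (fun y => y * q y) volume :=
  (hq.locallyIntegrable).continuous_mul continuous_id

theorem ii_mul_id {q : ℝ → ℝ} (hq : Integrable q) (s t : ℝ) :
    IntervalIntegrable (fun y => y * q y) volume s t :=
  (hq.intervalIntegrable).continuousOn_mul continuous_id.continuousOn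

theorem stein_ibp {q τ g : ℝ → ℝ} (hq : Integrable q) (hτ : Measurable τ)
    (hst : ∀ f f' : ℝ → ℝ, (∀ x, HasDerivAt f (f' x) x) →
      (∃ M, ∀ x : ℝ, |τ x * f' x| + |x * f x| ≤ M) →
      ∫ x, q x * (τ x * f' x - x * f x) = 0)
    (hg : Measurable g) {M N s t : ℝ} (hM : ∀ x, |g x| ≤ M) (hN : ∀ x, |τ x * g x| ≤ N)
    (hst' : s < t) (hsupp : ∀ x, x ∉ Ioc s t → g x = 0) (hmean : ∫ x, g x = 0)
    (hder : ∀ x, HasDerivAt (fun y => ∫ u in (0 : ℝ)..y, g u) (g x) x) :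
    ∫ x, g x * (τ x * q x - (-∫ u in (0 : ℝ)..x, u * q u)) = 0 ∧
      Integrable (fun x => g x * (τ x * q x - (-∫ u in (0 : ℝ)..x, u * q u))) := by
  have hgi : ∀ u v : ℝ, IntervalIntegrable g volume u v := fun u v =>
    (intervalIntegrable_const (c := M)).mono_fun hg.aestronglyMeasurable
      (Filter.Eventually.of_forall fun y => by
        have : |g y| ≤ |M| := (hM y).trans (le_abs_self M)
        exact this)
  set F : ℝ → ℝ := fun y => ∫ u in s..y, g u with hF
  have hFd : ∀ x, HasDerivAt F (g x) x := by
    intro x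
    have e : F = fun y => (∫ u in (0 : ℝ)..y, g u) - ∫ u in (0 : ℝ)..s, g u := by
      funext y
      rw [intervalIntegral.integral_interval_sub_left (hgi _ _) (hgi _ _)]
    rw [e]
    exact (hder x).sub_const _
  have hFs : ∀ x, x ≤ s → F x = 0 := by
    intro x hx
    simp only [hF]
    rw [intervalIntegral.integral_of_ge hx, setIntegral_eq_zero_of_forall_eq_zero, neg_zero]
    intro y hy
    exact hsupp y fun h => absurd hy.2 (not_le.2 h.1)
  have hFt0 : F t = 0 := by
    simp only [hF]
    rw [intervalIntegral.integral_of_le hst'.le,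
      setIntegral_eq_integral_of_forall_compl_eq_zero hsupp, hmean]
  have hFt : ∀ x, t ≤ x → F x = 0 := by
    intro x hx
    have : F x = F t + ∫ u in t..x, g u :=
      (intervalIntegral.integral_add_adjacent_intervals (hgi _ _) (hgi _ _)).symm
    rw [this, hFt0, intervalIntegral.integral_of_le hx, setIntegral_eq_zero_of_forall_eq_zero,
      add_zero]
    intro y hy
    exact hsupp y fun h => absurd hy.1 (not_lt.2 h.2)
  have hFc : Continuous F := continuous_iff_continuousAt.2 fun x => (hFd x).continuousAt
  obtain ⟨C, hC⟩ := (isCompact_Icc (a := s) (b := t)).exists_bound_of_continuousOn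
    (f := fun x => x * F x) (by fun_prop)
  have hxF : ∀ x, |x * F x| ≤ max C 0 := by
    intro x
    by_cases hx : x ∈ Icc s t
    · exact (hC x hx).trans (le_max_left _ _)
    · have : F x = 0 := by
        rcases le_or_gt x s with h | h
        · exact hFs x h
        · apply hFt; by_contra h2; exact hx ⟨h.le, by linarith⟩
      simp [this]
  have h0 := hst F g hFd ⟨N + max C 0, fun x => add_le_add (hN x) (hxF x)⟩
  have i1 : Integrable (fun x => q x * (τ x * g x)) :=
    hq.mul_bdd (hτ.mul hg).aestronglyMeasurable (Filter.Eventually.of_forall hN)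
  have i2 : Integrable (fun x => q x * (x * F x)) :=
    hq.mul_bdd (by fun_prop) (Filter.Eventually.of_forall hxF)
  simp only [mul_sub] at h0
  rw [integral_sub i1 i2] at h0
  set R : ℝ → ℝ := fun x => ∫ u in (0 : ℝ)..x, u * q u with hR
  have hRc : Continuous R := intervalIntegral.continuous_primitive (fun a b => ii_mul_id hq a b) 0
  have hgint : Integrable g := by
    have : IntegrableOn g (Ioc s t) := (hgi s t).1
    rw [← integrableOn_iff_integrable_of_support_subset (s := Ioc s t)]
    · exact this
    · intro x hx; by_contra h; exact hx (hsupp x h)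
  have i3 : Integrable (fun x => g x * R x) := by
    rw [← integrableOn_iff_integrable_of_support_subset (s := Icc s t)]
    · exact (hgint.integrableOn).mul_continuousOn hRc.continuousOn isCompact_Icc
    · intro x hx; by_contra h
      exact hx (by simp [hsupp x fun h' => h (Ioc_subset_Icc_self h')])
  have e2 : ∫ x, q x * (x * F x) = -∫ x, g x * R x := by
    have a1 : ∫ x, q x * (x * F x) = ∫ x in s..t, F x * deriv R x := by
      rw [intervalIntegral.integral_of_le hst'.le,
        ← setIntegral_eq_integral_of_forall_compl_eq_zero (s := Ioc s t)]
      · apply setIntegral_congr_ae measurableSet_Ioc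
        filter_upwards [LocallyIntegrable.ae_hasDerivAt_integral (locInt_mul_id hq)] with x hx _
        rw [(hx 0).deriv]; ring
      · intro x hx
        have : F x = 0 := by
          rcases le_or_gt x s with h | h
          · exact hFs x h
          · apply hFt; by_contra h2; exact hx ⟨h, by linarith⟩
        simp [this]
    have a2 : ∫ x, g x * R x = ∫ x in s..t, deriv F x * R x := by
      rw [intervalIntegral.integral_of_le hst'.le,
        ← setIntegral_eq_integral_of_forall_compl_eq_zero (s := Ioc s t)]
      · apply setIntegral_congr_fun measurableSet_Ioc
        intro x _
        simp only [(hFd x).deriv]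
      · intro x hx
        simp [hsupp x hx]
    have hFac : AbsolutelyContinuousOnInterval F s t :=
      (hgi s t).absolutelyContinuousOnInterval_intervalIntegral (by simp)
    have hRac : AbsolutelyContinuousOnInterval R s t := by
      have h1 : AbsolutelyContinuousOnInterval (fun x => ∫ u in s..x, u * q u) s t :=
        (ii_mul_id hq s t).absolutelyContinuousOnInterval_intervalIntegral (by simp)
      have h2 : AbsolutelyContinuousOnInterval (fun _ : ℝ => R s) s t :=
        (LipschitzWith.const (R s)).lipschitzOnWith.absolutelyContinuousOnInterval
      have h3 := h1.fun_add h2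
      have e : R = fun x => (∫ u in s..x, u * q u) + R s := by
        funext x
        simp only [hR]
        rw [add_comm]
        exact (intervalIntegral.integral_add_adjacent_intervals (ii_mul_id hq _ _)
          (ii_mul_id hq _ _)).symm
      rw [e]; exact h3
    rw [a1, hFac.integral_mul_deriv_eq_deriv_mul hRac, a2, hFt0, hFs s le_rfl]
    ring
  have e3 : (fun x => g x * (τ x * q x - (-R x))) = fun x => q x * (τ x * g x) + g x * R x := by
    funext x; ring
  constructor
  · rw [e3, integral_add i1 i3]
    linarith
  · rw [e3]; exact i1.add i3

theorem exists_test {τ : ℝ → ℝ} (hτ : Measurable τ) {A : Set ℝ} (hA : MeasurableSet A)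
    (hpos : 0 < volume A) :
    ∃ (g : ℝ → ℝ) (N s t : ℝ), Measurable g ∧ (∀ x, 0 ≤ g x ∧ g x ≤ 1) ∧ (∀ x, x ∉ A → g x = 0) ∧
      s < t ∧ (∀ x, x ∉ Ioc s t → g x = 0) ∧ (∀ x, |τ x * g x| ≤ N) ∧
      0 < volume {x | g x ≠ 0} ∧
      ∀ x, HasDerivAt (fun y => ∫ t in (0 : ℝ)..y, g t) (g x) x := by
  have hU : A = ⋃ n : ℕ, A ∩ {x | |τ x| ≤ n} := by
    ext x
    simp only [mem_iUnion, mem_inter_iff]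
    constructor
    · intro hx
      obtain ⟨n, hn⟩ := exists_nat_ge |τ x|
      exact ⟨n, hx, hn⟩
    · rintro ⟨n, hx, _⟩; exact hx
  obtain ⟨n, hn⟩ : ∃ n : ℕ, 0 < volume (A ∩ {x | |τ x| ≤ n}) := by
    by_contra! hcon
    rw [hU, measure_iUnion_null (fun n => le_antisymm (hcon n) zero_le)] at hpos
    exact lt_irrefl _ hpos
  have hm : MeasurableSet (A ∩ {x | |τ x| ≤ n}) :=
    hA.inter (measurableSet_le hτ.norm measurable_const)
  obtain ⟨K, hKA, hK, hKpos⟩ := hm.exists_lt_isCompact hn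
  obtain ⟨g, hg, h01, hg0, hgv, hgd⟩ := exists_bump hK.isClosed hKpos
  obtain ⟨r, hr⟩ := hK.isBounded.subset_closedBall 0
  have hKr : ∀ x ∈ K, |x| ≤ |r| := fun x hx => by
    have := hr hx
    rw [mem_closedBall_zero_iff] at this
    exact le_trans this (le_abs_self r)
  refine ⟨g, n, -|r| - 1, |r| + 1, hg, h01, fun x hx => hg0 x fun h => hx (hKA h).1,
    by linarith [abs_nonneg r], ?_, ?_, ?_, hgd⟩
  · intro x hx
    apply hg0
    intro hxK
    have := abs_le.1 (hKr x hxK)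
    exact hx ⟨by linarith, by linarith⟩
  · intro x
    by_cases hx : x ∈ K
    · have h1 : |τ x| ≤ n := (hKA hx).2
      rw [abs_mul, abs_of_nonneg (h01 x).1]
      calc |τ x| * g x ≤ n * 1 := mul_le_mul h1 (h01 x).2 (h01 x).1 (Nat.cast_nonneg n)
        _ = n := mul_one _
    · rw [hg0 x hx]; simp
  · by_contra hcon
    have hz : volume {x | g x ≠ 0} = 0 := le_antisymm (not_lt.1 hcon) zero_le
    have hsub : K ⊆ {x | x ∈ K ∧ g x ≠ 1} ∪ {x | g x ≠ 0} := by
      intro x hx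
      by_cases h : g x = 1
      · right
        have : g x ≠ 0 := by rw [h]; exact one_ne_zero
        exact this
      · left; exact ⟨hx, h⟩
    have := (measure_mono hsub).trans (measure_union_le (μ := volume) _ _)
    rw [hz, add_zero] at this
    exact absurd this (not_le.2 hgv)

theorem stein_ode {q τ : ℝ → ℝ} (hqm : Measurable q) (hq : Integrable q) (hτ : Measurable τ)
    (hst : ∀ f f' : ℝ → ℝ, (∀ x, HasDerivAt f (f' x) x) →
      (∃ M, ∀ x : ℝ, |τ x * f' x| + |x * f x| ≤ M) →
      ∫ x, q x * (τ x * f' x - x * f x) = 0) :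
    ∃ c : ℝ, ∀ᵐ x, τ x * q x = c - ∫ u in (0 : ℝ)..x, u * q u := by
  obtain ⟨g₀, N₀, s₀, t₀, hg₀, h01₀, -, hst₀, hsupp₀, hN₀, hpos₀, hder₀⟩ :=
    exists_test hτ MeasurableSet.univ (by simp)
  have hgint : ∀ (g : ℝ → ℝ) (s t : ℝ), Measurable g → (∀ x, 0 ≤ g x ∧ g x ≤ 1) →
      (∀ x, x ∉ Ioc s t → g x = 0) → Integrable g := by
    intro g s t hg h01 hs
    rw [← integrableOn_iff_integrable_of_support_subset (s := Ioc s t)]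
    · refine Measure.integrableOn_of_bounded (M := 1) measure_Ioc_lt_top.ne hg.aestronglyMeasurable ?_
      refine Filter.Eventually.of_forall fun x => ?_
      rw [Real.norm_eq_abs, abs_of_nonneg (h01 x).1]; exact (h01 x).2
    · intro x hx; by_contra h; exact hx (hs x h)
  have i₀ := hgint g₀ s₀ t₀ hg₀ h01₀ hsupp₀
  have hγ : 0 < ∫ x, g₀ x := by
    rw [integral_pos_iff_support_of_nonneg (fun x => (h01₀ x).1) i₀]
    exact hpos₀
  set γ := ∫ x, g₀ x with hγdef
  set R : ℝ → ℝ := fun x => ∫ u in (0 : ℝ)..x, u * q u with hR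
  have hRc : Continuous R := intervalIntegral.continuous_primitive (fun a b => ii_mul_id hq a b) 0
  have hloc : ∀ (g : ℝ → ℝ) (N s t : ℝ), Measurable g → (∀ x, 0 ≤ g x ∧ g x ≤ 1) →
      (∀ x, x ∉ Ioc s t → g x = 0) → (∀ x, |τ x * g x| ≤ N) →
      Integrable (fun x => g x * (τ x * q x + R x)) := by
    intro g N s t hg h01 hs hN
    have i1 : Integrable (fun x => q x * (τ x * g x)) :=
      hq.mul_bdd (hτ.mul hg).aestronglyMeasurable (Filter.Eventually.of_forall hN)
    have i3 : Integrable (fun x => g x * R x) := by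
      rw [← integrableOn_iff_integrable_of_support_subset (s := Icc s t)]
      · exact ((hgint g s t hg h01 hs).integrableOn).mul_continuousOn hRc.continuousOn isCompact_Icc
      · intro x hx; by_contra h
        exact hx (by simp [hs x fun h' => h (Ioc_subset_Icc_self h')])
    refine (i1.add i3).congr (Filter.Eventually.of_forall fun x => ?_)
    simp only [Pi.add_apply]; ring
  set c := (∫ x, g₀ x * (τ x * q x + R x)) / γ with hc
  refine ⟨c, ?_⟩
  set φ : ℝ → ℝ := fun x => τ x * q x + R x - c with hφ
  have hφm : Measurable φ := ((hτ.mul hqm).add hRc.measurable).sub_const _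
  have key : ∀ (g : ℝ → ℝ) (N s t : ℝ), Measurable g → (∀ x, 0 ≤ g x ∧ g x ≤ 1) → s < t →
      (∀ x, x ∉ Ioc s t → g x = 0) → (∀ x, |τ x * g x| ≤ N) →
      (∀ x, HasDerivAt (fun y => ∫ t in (0 : ℝ)..y, g t) (g x) x) →
      Integrable (fun x => g x * φ x) ∧ ∫ x, g x * φ x = 0 := by
    intro g N s t hg h01 hlt hs hN hder
    have ig := hgint g s t hg h01 hs
    have iL := hloc g N s t hg h01 hs hN
    have iL₀ := hloc g₀ N₀ s₀ t₀ hg₀ h01₀ hsupp₀ hN₀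
    have e : (fun x => g x * φ x) = fun x => g x * (τ x * q x + R x) - g x * c := by
      funext x; simp only [hφ]; ring
    refine ⟨by rw [e]; exact iL.sub (ig.mul_const c), ?_⟩
    set α := (∫ x, g x) / γ with hα
    have main := (stein_ibp (g := fun x => g x - α * g₀ x) hq hτ hst
      (hg.sub (hg₀.const_mul α)) (M := 1 + |α| * 1) (N := N + |α| * N₀)
      (s := min s s₀) (t := max t t₀) ?_ ?_ ?_ ?_ ?_ ?_).1
    · have e2 : (fun x => (g x - α * g₀ x) * (τ x * q x - (-R x)))
          = fun x => g x * (τ x * q x + R x) - α * (g₀ x * (τ x * q x + R x)) := by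
        funext x; ring
      have main' : ∫ x, (g x - α * g₀ x) * (τ x * q x - (-R x)) = 0 := main
      rw [e2, integral_sub iL (iL₀.const_mul α), integral_const_mul] at main'
      rw [e, integral_sub iL (ig.mul_const c), integral_mul_const, hc]
      rw [hα] at main'
      rw [← main']
      ring
    · intro x
      refine (abs_sub _ _).trans (add_le_add ?_ ?_)
      · rw [abs_of_nonneg (h01 x).1]; exact (h01 x).2
      · rw [abs_mul, abs_of_nonneg (h01₀ x).1]
        exact mul_le_mul_of_nonneg_left (h01₀ x).2 (abs_nonneg _)
    · intro x
      have e3 : τ x * (g x - α * g₀ x) = τ x * g x - α * (τ x * g₀ x) := by ring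
      rw [e3]
      refine (abs_sub _ _).trans (add_le_add (hN x) ?_)
      rw [abs_mul]
      exact mul_le_mul_of_nonneg_left (hN₀ x) (abs_nonneg _)
    · exact lt_of_le_of_lt (min_le_left _ _) (hlt.trans_le (le_max_left _ _))
    · intro x hx
      rw [hs x, hsupp₀ x]
      · ring
      · exact fun h => hx ⟨lt_of_le_of_lt (min_le_right _ _) h.1, h.2.trans (le_max_right _ _)⟩
      · exact fun h => hx ⟨lt_of_le_of_lt (min_le_left _ _) h.1, h.2.trans (le_max_left _ _)⟩
    · rw [integral_sub ig (i₀.const_mul α), integral_const_mul, hα, ← hγdef]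
      field_simp
      ring
    · intro x
      have e4 : (fun y => ∫ u in (0 : ℝ)..y, (g u - α * g₀ u))
          = fun y => (∫ u in (0 : ℝ)..y, g u) - α * ∫ u in (0 : ℝ)..y, g₀ u := by
        funext y
        rw [intervalIntegral.integral_sub ig.intervalIntegrable
          (i₀.const_mul α).intervalIntegrable, intervalIntegral.integral_const_mul]
      rw [e4]
      exact (hder x).sub ((hder₀ x).const_mul α)
  have hp : volume {x | 0 < φ x} = 0 := by
    by_contra hne
    obtain ⟨g, N, s, t, hg, h01, hA, hlt, hs, hN, hpos, hder⟩ :=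
      exists_test hτ (measurableSet_lt measurable_const hφm) (pos_iff_ne_zero.2 hne)
    obtain ⟨hi, hz⟩ := key g N s t hg h01 hlt hs hN hder
    have hsg : ∀ x, g x ≠ 0 → 0 < φ x := fun x hx => by
      by_contra h; exact hx (hA x h)
    have := (integral_pos_iff_support_of_nonneg (f := fun x => g x * φ x) (fun x => by
      by_cases h : g x = 0
      · simp [h]
      · exact mul_nonneg (h01 x).1 (hsg x h).le) hi).2 (lt_of_lt_of_le hpos (measure_mono
        fun x hx => mul_ne_zero hx (hsg x hx).ne'))
    rw [hz] at this
    exact lt_irrefl _ this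
  have hn : volume {x | φ x < 0} = 0 := by
    by_contra hne
    obtain ⟨g, N, s, t, hg, h01, hA, hlt, hs, hN, hpos, hder⟩ :=
      exists_test hτ (measurableSet_lt hφm measurable_const) (pos_iff_ne_zero.2 hne)
    obtain ⟨hi, hz⟩ := key g N s t hg h01 hlt hs hN hder
    have hsg : ∀ x, g x ≠ 0 → φ x < 0 := fun x hx => by
      by_contra h; exact hx (hA x h)
    have := (integral_pos_iff_support_of_nonneg (f := fun x => -(g x * φ x)) (fun x => by
      by_cases h : g x = 0
      · simp [h]
      · exact neg_nonneg.2 (mul_nonpos_of_nonneg_of_nonpos (h01 x).1 (hsg x h).le)) hi.neg).2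
          (lt_of_lt_of_le hpos (measure_mono
        fun x hx => neg_ne_zero.2 (mul_ne_zero hx (hsg x hx).ne)))
    rw [integral_neg, hz, neg_zero] at this
    exact lt_irrefl _ this
  have a1 : ∀ᵐ x, ¬ 0 < φ x := measure_eq_zero_iff_ae_notMem.1 hp
  have a2 : ∀ᵐ x, ¬ φ x < 0 := measure_eq_zero_iff_ae_notMem.1 hn
  filter_upwards [a1, a2] with x h1 h2
  have : φ x = 0 := le_antisymm (not_lt.1 h1) (not_lt.1 h2)
  simp only [hφ] at this
  linarith


theorem argmin_end {k G p : ℝ → ℝ} {T s : ℝ} (hp : ∀ x, 0 ≤ p x) (hG : 0 < G T)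
    (hs : s ∈ uIcc 0 T) (hmin : ∀ x ∈ uIcc 0 T, k s ≤ k x)
    (hid : (k T - k s) * G T = -∫ y in s..T, (k y - k s) * (y * p y)) : k T = k s := by
  refine le_antisymm ?_ (hmin T right_mem_uIcc)
  have hpos : 0 ≤ ∫ y in s..T, (k y - k s) * (y * p y) := by
    rcases le_total 0 T with h | h
    · rw [uIcc_of_le h] at hs hmin
      apply intervalIntegral.integral_nonneg hs.2
      intro y hy
      have hy0 : 0 ≤ y := hs.1.trans hy.1
      exact mul_nonneg (sub_nonneg.2 (hmin y ⟨hy0, hy.2⟩)) (mul_nonneg hy0 (hp y))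
    · rw [uIcc_of_ge h] at hs hmin
      rw [intervalIntegral.integral_symm, ← intervalIntegral.integral_neg]
      apply intervalIntegral.integral_nonneg hs.1
      intro y hy
      have hy0 : y ≤ 0 := hy.2.trans hs.2
      have h1 := sub_nonneg.2 (hmin y ⟨hy.1, hy0⟩)
      have h2 : 0 ≤ -y * p y := mul_nonneg (by linarith) (hp y)
      nlinarith [mul_nonneg h1 h2]
  by_contra hlt
  have : 0 < (k T - k s) * G T := mul_pos (by linarith) hG
  linarith

theorem k_const {k G p : ℝ → ℝ} {T : ℝ} (hp : ∀ x, 0 ≤ p x) (hG : 0 < G T)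
    (hk : ContinuousOn k (uIcc 0 T))
    (hid : ∀ s ∈ uIcc 0 T, (k T - k s) * G T = -∫ y in s..T, (k y - k s) * (y * p y)) :
    k T = k 0 := by
  obtain ⟨s, hs, hmin⟩ := isCompact_uIcc.exists_isMinOn nonempty_uIcc hk
  obtain ⟨s', hs', hmax⟩ := isCompact_uIcc.exists_isMaxOn nonempty_uIcc hk
  have h1 := argmin_end hp hG hs (fun x hx => hmin hx) (hid s hs)
  have h2 : -k T = -k s' := argmin_end (k := fun x => -k x) hp hG hs'
    (fun x hx => neg_le_neg (hmax hx)) (by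
      have := hid s' hs'
      have e : ∀ y, (-k y - -k s') * (y * p y) = -((k y - k s') * (y * p y)) := fun y => by ring
      simp only [e, intervalIntegral.integral_neg]
      linarith)
  have h3 : k s ≤ k 0 := hmin left_mem_uIcc
  have h4 : k 0 ≤ k s' := hmax left_mem_uIcc
  linarith

theorem G_facts {p : ℝ → ℝ} {I : Set ℝ} (hI : IsOpen I) (hp0 : ∀ x, 0 ≤ p x)
    (hpI : ∀ x, 0 < p x ↔ x ∈ I) (hyint : Integrable (fun y => y * p y))
    (hmean : ∫ y, y * p y = 0) :
    (∀ x ∈ I, 0 < ∫ y in Ioi x, y * p y) ∧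
    ∀ x, ∫ y in Ioi x, y * p y = (∫ y in Ioi (0 : ℝ), y * p y) - ∫ y in (0 : ℝ)..x, y * p y := by
  constructor
  · intro x hx
    obtain ⟨δ, hδ, hball⟩ := Metric.isOpen_iff.1 hI x hx
    have hpb : ∀ y, |y - x| < δ → 0 < p y := fun y hy => (hpI y).2 (hball hy)
    rcases le_or_gt 0 x with h | h
    · rw [setIntegral_pos_iff_support_of_nonneg_ae]
      · have hsub : Ioo x (x + δ) ⊆ (Function.support fun y => y * p y) ∩ Ioi x := by
          intro y hy
          refine ⟨mul_ne_zero (by linarith [hy.1]) (hpb y ?_).ne', hy.1⟩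
          rw [abs_lt]; constructor <;> linarith [hy.1, hy.2]
        refine lt_of_lt_of_le ?_ (measure_mono hsub)
        simp [hδ]
      · refine (ae_restrict_iff' measurableSet_Ioi).2 (Filter.Eventually.of_forall fun y hy => ?_)
        have hy : x < y := hy
        exact mul_nonneg (by linarith) (hp0 y)
      · exact hyint.integrableOn
    · have h1 : ∫ y in Ioi x, y * p y = ∫ y in Iic x, -(y * p y) := by
        have := intervalIntegral.integral_Iic_add_Ioi (b := x) hyint.integrableOn hyint.integrableOn
        rw [hmean] at this
        rw [integral_neg]
        linarith
      rw [h1, setIntegral_pos_iff_support_of_nonneg_ae]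
      · have hsub : Ioo (x - δ) x ⊆ (Function.support fun y => -(y * p y)) ∩ Iic x := by
          intro y hy
          refine ⟨neg_ne_zero.2 (mul_ne_zero (by linarith [hy.2]) (hpb y ?_).ne'), hy.2.le⟩
          rw [abs_lt]; constructor <;> linarith [hy.1, hy.2]
        refine lt_of_lt_of_le ?_ (measure_mono hsub)
        simp [hδ]
      · refine (ae_restrict_iff' measurableSet_Iic).2 (Filter.Eventually.of_forall fun y hy => ?_)
        have hy : y ≤ x := hy
        exact neg_nonneg.2 (mul_nonpos_of_nonpos_of_nonneg (by linarith) (hp0 y))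
      · exact hyint.integrableOn.neg
  · intro x
    have := intervalIntegral.integral_Ioi_sub_Ioi' (a := 0) (b := x)
      hyint.integrableOn hyint.integrableOn
    linarith

theorem density_eq {p q τ : ℝ → ℝ} {I : Set ℝ} (hI : IsOpen I) (hIc : OrdConnected I)
    (h0I : (0 : ℝ) ∈ I) (hpm : Measurable p) (hp0 : ∀ x, 0 ≤ p x)
    (hpI : ∀ x, 0 < p x ↔ x ∈ I) (hyint : Integrable (fun y => y * p y))
    (hmean : ∫ y, y * p y = 0) (hp1 : ∫ y, p y = 1)
    (hτI : ∀ x ∈ I, τ x = (∫ y in Ioi x, y * p y) / p x) (hτ0 : ∀ x, x ∉ I → τ x = 0)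
    (hqm : Measurable q) (hq : Integrable q) (hq1 : ∫ y, q y = 1)
    (hst : ∀ f f' : ℝ → ℝ, (∀ x, HasDerivAt f (f' x) x) →
      (∃ M, ∀ x : ℝ, |τ x * f' x| + |x * f x| ≤ M) →
      ∫ x, q x * (τ x * f' x - x * f x) = 0) :
    q =ᵐ[volume] p := by
  obtain ⟨hGpos, hGeq⟩ := G_facts hI hp0 hpI hyint hmean
  set G : ℝ → ℝ := fun x => ∫ y in Ioi x, y * p y with hG
  have hii : ∀ s t, IntervalIntegrable (fun y => y * p y) volume s t :=
    fun s t => hyint.intervalIntegrable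
  have hGeq' : ∀ x, G x = G 0 - ∫ y in (0 : ℝ)..x, y * p y := hGeq
  have hGc : Continuous G := by
    have : G = fun x => G 0 - ∫ y in (0 : ℝ)..x, y * p y := funext hGeq'
    rw [this]
    exact continuous_const.sub (intervalIntegral.continuous_primitive hii 0)
  have hτm : Measurable τ := by
    have : τ = I.indicator (fun x => G x / p x) := by
      funext x
      by_cases hx : x ∈ I
      · rw [indicator_of_mem hx, hτI x hx]
      · rw [indicator_of_notMem hx, hτ0 x hx]
    rw [this]
    exact (hGc.measurable.div hpm).indicator hI.measurableSet
  obtain ⟨c, hc⟩ := stein_ode hqm hq hτm hst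
  set h : ℝ → ℝ := fun x => c - ∫ u in (0 : ℝ)..x, u * q u with hh
  have hhc : Continuous h := continuous_const.sub
    (intervalIntegral.continuous_primitive (fun a b => ii_mul_id hq a b) 0)
  set k : ℝ → ℝ := fun x => h x / G x with hk
  have hkc : ContinuousOn k I := hhc.continuousOn.div hGc.continuousOn fun x hx => (hGpos x hx).ne'
  have hqk : ∀ᵐ x, x ∈ I → q x = k x * p x := by
    filter_upwards [hc] with x hx hxI
    have h1 : τ x * q x = h x := hx
    have h2 := hGpos x hxI
    have h3 := (hpI x).2 hxI
    rw [hτI x hxI] at h1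
    simp only [hk, ← h1]
    have h2' : G x ≠ 0 := h2.ne'
    change q x = G x / p x * q x / G x * p x
    field_simp
  have hkconst : ∀ T ∈ I, k T = k 0 := by
    intro T hT
    have hsubI : uIcc 0 T ⊆ I := hIc.uIcc_subset h0I hT
    refine k_const (G := G) hp0 (hGpos T hT) (hkc.mono hsubI) ?_
    intro s hs
    have hsT : uIcc s T ⊆ I := hIc.uIcc_subset (hsubI hs) hT
    have e1 : ∫ y in s..T, k y * (y * p y) = h s - h T := by
      have : ∫ y in s..T, k y * (y * p y) = ∫ y in s..T, y * q y := by
        apply intervalIntegral.integral_congr_ae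
        filter_upwards [hqk] with y hy hyT
        rw [hy (hsT (uIoc_subset_uIcc hyT))]; ring
      rw [this, ← intervalIntegral.integral_interval_sub_left (a := 0)
        (ii_mul_id hq _ _) (ii_mul_id hq _ _)]
      simp only [hh]; ring
    have e2 : ∫ y in s..T, y * p y = G s - G T := by
      rw [← intervalIntegral.integral_interval_sub_left (a := 0) (hii _ _) (hii _ _), hGeq' s,
        hGeq' T]
      ring
    have hki : IntervalIntegrable (fun y => k y * (y * p y)) volume s T :=
      (hii s T).continuousOn_mul (hkc.mono hsT)
    simp only [sub_mul]
    rw [intervalIntegral.integral_sub hki ((hii s T).const_mul _),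
      intervalIntegral.integral_const_mul, e1, e2]
    have hs' : k s * G s = h s := div_mul_cancel₀ _ (hGpos s (hsubI hs)).ne'
    have hT' : k T * G T = h T := div_mul_cancel₀ _ (hGpos T hT).ne'
    linear_combination hT' - hs'
  have hout : ∀ᵐ x, x ∉ I → q x = 0 := by
    have hJo : IsOpen (interior Iᶜ) := isOpen_interior
    have hopen : IsOpen (interior Iᶜ ∩ {x | h x ≠ 0}) :=
      hJo.inter (isOpen_ne_fun hhc continuous_const)
    have hnull : volume (interior Iᶜ ∩ {x | h x ≠ 0}) = 0 := by
      rw [measure_eq_zero_iff_ae_notMem]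
      filter_upwards [hc] with x hx hmem
      have h1 : τ x * q x = h x := hx
      rw [hτ0 x (interior_subset hmem.1), zero_mul] at h1
      exact hmem.2 h1.symm
    have hempty := hopen.measure_eq_zero_iff volume |>.1 hnull
    have hz : ∀ x ∈ interior Iᶜ, h x = 0 := by
      intro x hx
      by_contra hne
      have : x ∈ interior Iᶜ ∩ {x | h x ≠ 0} := ⟨hx, hne⟩
      rw [hempty] at this
      exact this
    have hfr : volume (frontier I) = 0 := hIc.convex.addHaar_frontier volume
    filter_upwards [LocallyIntegrable.ae_hasDerivAt_integral (locInt_mul_id hq),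
      measure_eq_zero_iff_ae_notMem.1 hfr] with x hx hxf hxI
    have hxint : x ∈ interior Iᶜ := by
      rw [interior_compl]
      intro hcl
      exact hxf ⟨hcl, fun hi => hxI (interior_subset hi)⟩
    have hd1 : HasDerivAt h (-(x * q x)) x := by
      simpa using (hx 0).const_sub c
    have hd2 : HasDerivAt h 0 x := by
      refine (hasDerivAt_const x (0 : ℝ)).congr_of_eventuallyEq ?_
      filter_upwards [hJo.mem_nhds hxint] with y hy
      exact hz y hy
    have h3 := hd1.unique hd2
    have hx0 : x ≠ 0 := fun h => hxI (h ▸ h0I)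
    rcases mul_eq_zero.1 (neg_eq_zero.1 h3) with h4 | h4
    · exact absurd h4 hx0
    · exact h4
  have hfin : q =ᵐ[volume] fun x => k 0 * p x := by
    filter_upwards [hqk, hout] with x h1 h2
    by_cases hx : x ∈ I
    · rw [h1 hx, hkconst x hx]
    · rw [h2 hx]
      have : p x = 0 := le_antisymm (not_lt.1 fun h => hx ((hpI x).1 h)) (hp0 x)
      rw [this, mul_zero]
  have hk1 : k 0 = 1 := by
    have := integral_congr_ae hfin
    rw [hq1, integral_const_mul, hp1, mul_one] at this
    exact this.symm
  filter_upwards [hfin] with x hx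
  rw [hx, hk1, one_mul]


/-- Stein characterization: if `Z` has a centered integrable density `p` supported on `(a,b)`
with associated `τ` satisfying the divergence conditions `∫₀^b y/τ = +∞`, `∫_a^0 y/τ = −∞`,
and if `Y` has an absolutely continuous law and satisfies `E[τ(Y) f'(Y) − Y f(Y)] = 0` for
every differentiable `f` making `x ↦ |τ(x) f'(x)| + |x f(x)|` bounded, then `Y` has the same
law as `Z`. -/
theorem stein_characterization_general_density
    {Ω : Type*} [MeasurableSpace Ω] (P : Measure Ω) [IsProbabilityMeasure P]
    {Ω' : Type*} [MeasurableSpace Ω'] (P' : Measure Ω') [IsProbabilityMeasure P']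
    (Z : Ω → ℝ) (hZmeas : Measurable Z)
    (p : ℝ → ℝ) (hpmeas : Measurable p) (hp0 : ∀ x, 0 ≤ p x)
    (hdens : P.map Z = volume.withDensity (fun x => ENNReal.ofReal (p x)))
    (a b : EReal) (ha : a < 0) (hb : 0 < b)
    (hsupp : ∀ x : ℝ, 0 < p x ↔ (a < (x : EReal) ∧ (x : EReal) < b))
    (hZint : Integrable Z P) (hZmean : ∫ ω, Z ω ∂P = 0)
    (τ : ℝ → ℝ)
    (hτ : ∀ x : ℝ, τ x =
      if a < (x : EReal) ∧ (x : EReal) < b then (∫ y in Set.Ioi x, y * p y) / p x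
      else 0)
    (hdiv_pos : ∫⁻ y in {y : ℝ | 0 < y ∧ (y : EReal) < b},
      ENNReal.ofReal (y / τ y) = ⊤)
    (hdiv_neg : ∫⁻ y in {y : ℝ | a < (y : EReal) ∧ y < 0},
      ENNReal.ofReal (-y / τ y) = ⊤)
    (Y : Ω' → ℝ) (hYmeas : Measurable Y)
    (hYabs : P'.map Y ≪ (volume : Measure ℝ))
    (hstein : ∀ f f' : ℝ → ℝ, (∀ x, HasDerivAt f (f' x) x) →
      (∃ M, ∀ x : ℝ, |τ x * f' x| + |x * f x| ≤ M) →
      ∫ ω, (τ (Y ω) * f' (Y ω) - Y ω * f (Y ω)) ∂P' = 0) :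
    P'.map Y = P.map Z := by
  set I : Set ℝ := {x : ℝ | a < (x : EReal) ∧ (x : EReal) < b} with hIdef
  have hIo : IsOpen I :=
    (isOpen_lt continuous_const continuous_coe_real_ereal).inter
      (isOpen_lt continuous_coe_real_ereal continuous_const)
  have hIc : OrdConnected I := by
    refine ⟨fun x hx y hy z hz => ⟨lt_of_lt_of_le hx.1 ?_, lt_of_le_of_lt ?_ hy.2⟩⟩
    · exact EReal.coe_le_coe_iff.2 hz.1
    · exact EReal.coe_le_coe_iff.2 hz.2
  have h0I : (0 : ℝ) ∈ I := ⟨by simpa using ha, by simpa using hb⟩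
  have hofm : Measurable fun x => ENNReal.ofReal (p x) := hpmeas.ennreal_ofReal
  have hprobZ : IsProbabilityMeasure (P.map Z) := Measure.isProbabilityMeasure_map hZmeas.aemeasurable
  have hprobY : IsProbabilityMeasure (P'.map Y) :=
    Measure.isProbabilityMeasure_map hYmeas.aemeasurable
  have hlp : ∫⁻ x, ENNReal.ofReal (p x) = 1 := by
    have := hprobZ.measure_univ
    rw [hdens, withDensity_apply _ MeasurableSet.univ, Measure.restrict_univ] at this
    exact this
  have hp1 : ∫ x, p x = 1 := by
    rw [integral_eq_lintegral_of_nonneg_ae (Filter.Eventually.of_forall hp0)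
      hpmeas.aestronglyMeasurable, hlp, ENNReal.toReal_one]
  have hlt : ∀ᵐ x, ENNReal.ofReal (p x) < ⊤ :=
    Filter.Eventually.of_forall fun x => ENNReal.ofReal_lt_top
  have hidint : Integrable (fun x : ℝ => x) (P.map Z) :=
    (integrable_map_measure measurable_id.aestronglyMeasurable hZmeas.aemeasurable).2 hZint
  have hyint : Integrable (fun y => y * p y) := by
    rw [hdens, integrable_withDensity_iff hofm hlt] at hidint
    refine hidint.congr (Filter.Eventually.of_forall fun x => ?_)
    simp only [ENNReal.toReal_ofReal (hp0 x)]
  have hmean : ∫ y, y * p y = 0 := by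
    have h1 : ∫ x, x ∂(P.map Z) = 0 := by
      rw [integral_map (f := fun x : ℝ => x) hZmeas.aemeasurable hidint.aestronglyMeasurable]
      exact hZmean
    rw [hdens, integral_withDensity_eq_integral_toReal_smul hofm hlt] at h1
    rw [← h1]
    refine integral_congr_ae (Filter.Eventually.of_forall fun x => ?_)
    simp only [ENNReal.toReal_ofReal (hp0 x), smul_eq_mul, mul_comm]
  set ν := P'.map Y with hν
  have hwd : volume.withDensity (ν.rnDeriv volume) = ν := Measure.withDensity_rnDeriv_eq _ _ hYabs
  set q : ℝ → ℝ := fun x => (ν.rnDeriv volume x).toReal with hqdef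
  have hqm : Measurable q := (Measure.measurable_rnDeriv _ _).ennreal_toReal
  have hqi : Integrable q := Measure.integrable_toReal_rnDeriv
  have hqlt : ∀ᵐ x, ν.rnDeriv volume x < ⊤ := Measure.rnDeriv_lt_top _ _
  have hq1 : ∫ x, q x = 1 := by
    have := integral_withDensity_eq_integral_toReal_smul (Measure.measurable_rnDeriv ν volume) hqlt
      (fun _ => (1 : ℝ))
    rw [hwd] at this
    simpa using this.symm
  have hτm : Measurable τ := by
    have hGc : Measurable fun x => ∫ y in Set.Ioi x, y * p y := by
      have : (fun x => ∫ y in Set.Ioi x, y * p y)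
          = fun x => (∫ y in Ioi (0 : ℝ), y * p y) - ∫ y in (0 : ℝ)..x, y * p y :=
        funext (G_facts hIo hp0 hsupp hyint hmean).2
      rw [this]
      exact (continuous_const.sub (intervalIntegral.continuous_primitive
        (fun _ _ => hyint.intervalIntegrable) 0)).measurable
    have : τ = fun x => I.indicator (fun x => (∫ y in Set.Ioi x, y * p y) / p x) x := by
      funext x
      rw [hτ x]
      by_cases hx : x ∈ I
      · rw [indicator_of_mem hx, if_pos (show a < (x : EReal) ∧ (x : EReal) < b from hx)]
      · rw [indicator_of_notMem hx, if_neg (show ¬ (a < (x : EReal) ∧ (x : EReal) < b) from hx)]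
    rw [this]
    exact (hGc.div hpmeas).indicator hIo.measurableSet
  have hqp : q =ᵐ[volume] p := by
    refine density_eq (τ := τ) hIo hIc h0I hpmeas hp0 hsupp hyint hmean hp1 ?_ ?_ hqm hqi hq1 ?_
    · intro x hx
      rw [hτ x, if_pos (show a < (x : EReal) ∧ (x : EReal) < b from hx)]
    · intro x hx
      rw [hτ x, if_neg (show ¬ (a < (x : EReal) ∧ (x : EReal) < b) from hx)]
    · intro f f' hf hM
      have h1 := hstein f f' hf hM
      have hfm : Measurable f :=
        (continuous_iff_continuousAt.2 fun x => (hf x).continuousAt).measurable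
      have hf'm : Measurable f' := by
        have : f' = deriv f := funext fun x => (hf x).deriv.symm
        rw [this]; exact measurable_deriv f
      have hφm : Measurable fun x => τ x * f' x - x * f x :=
        (hτm.mul hf'm).sub (measurable_id.mul hfm)
      rw [← integral_map (f := fun x => τ x * f' x - x * f x) hYmeas.aemeasurable
        hφm.aestronglyMeasurable, ← hν, ← hwd,
        integral_withDensity_eq_integral_toReal_smul (Measure.measurable_rnDeriv ν volume) hqlt]
        at h1
      exact h1
  rw [hdens, ← hwd]
  apply withDensity_congr_ae
  filter_upwards [hqp, hqlt] with x h1 h2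
  rw [← h1]
  exact (ENNReal.ofReal_toReal h2.ne).symm
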